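/- For all reals $t \ge 1$, $s \ge 3$, $\epsilon \in (0,1]$, $c \in (0,1]$ and $0 < \omega \le \delta \le e^{-e}$: if $$\frac{1}{t}\log\left(\frac{\log((1+\epsilon)t)}{\omega}\right) \ge \frac{c}{s}\log\left(\frac{\log((1+\epsilon)s)}{\delta}\right),$$ then $$t \le \frac{s}{c}\cdot\frac{\log\left(2\log\left(\frac{1}{c\omega}\right)/\omega\right)}{\log(1/\delta)},$$ where $\log$ denotes the natural logarithm. -/

import Mathlib

/-!
Write `u = k t`, `v = k s` with `k = 1 + ε`, and `β = log (log v / δ)`, so that the hypothesis reads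
`(c β / v) u ≤ log (log u / ω)`. Since the right-hand side is less than `√u / ω`, this first yields
the crude bound `√u < v / (c β ω)`. As `β ≥ e`, taking logarithms gives
`log u ≤ 2 (log v + log (1 / (c ω)) - 1) ≤ log v * (2 log (1 / (c ω)))`. Feeding this back into the
hypothesis bounds `c t / s` by `log (log v * x) / log (log v * y)` with
`x = 2 log (1 / (c ω)) / ω ≥ y = 1 / δ`, and the common factor `log v ≥ 1` only brings this ratio
closer to `1`.
-/

open Real

lemma le_log_one_div {x y : ℝ} (hx : 0 < x) (h : x ≤ exp (-y)) : y ≤ log (1 / x) := by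
  rw [one_div, log_inv]
  exact le_neg_of_le_neg ((log_le_iff_le_exp hx).2 h)

lemma log_lt_half_self {x : ℝ} (hx : 0 < x) : log x < x / 2 := by
  have hhalf : log (x / 2) ≤ x / 2 - 1 := log_le_sub_one_of_pos (half_pos hx)
  rw [log_div hx.ne' two_ne_zero] at hhalf
  linarith [log_two_lt_d9]

lemma log_log_lt_sqrt {x : ℝ} (hx : 1 < x) : log (log x) < √x :=
  calc log (log x) < log x / 2 := log_lt_half_self (log_pos hx)
    _ = log √x := (log_sqrt (by linarith)).symm
    _ ≤ √x := log_le_self (sqrt_nonneg x)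

lemma mul_log_log_div_lt_sqrt {u ω : ℝ} (hu : 1 < u) (hω0 : 0 < ω) (hω1 : ω ≤ 1) :
    ω * log (log u / ω) < √u := by
  have hinv : ω * log ω⁻¹ ≤ 1 - ω := by
    calc ω * log ω⁻¹ ≤ ω * (ω⁻¹ - 1) := by
          gcongr
          exact log_le_sub_one_of_pos (inv_pos.2 hω0)
      _ = 1 - ω := by rw [mul_sub, mul_inv_cancel₀ hω0.ne', mul_one]
  calc ω * log (log u / ω) = ω * log (log u) + ω * log ω⁻¹ := by
        rw [div_eq_mul_inv, log_mul (log_pos hu).ne' (inv_pos.2 hω0).ne', mul_add]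
    _ < ω * √u + (1 - ω) := add_lt_add_of_lt_of_le (by gcongr; exact log_log_lt_sqrt hu) hinv
    _ ≤ √u := by nlinarith [one_le_sqrt.2 hu.le]

lemma mul_mul_sqrt_lt_one_of_mul_le {u κ ω : ℝ} (hu : 1 < u) (hω0 : 0 < ω) (hω1 : ω ≤ 1)
    (h : κ * u ≤ log (log u / ω)) : κ * ω * √u < 1 := by
  have hsqrt : 0 < √u := sqrt_pos.2 (by linarith)
  refine lt_of_mul_lt_mul_right ?_ hsqrt.le
  calc κ * ω * √u * √u = ω * (κ * u) := by rw [mul_assoc, mul_self_sqrt (by linarith)]; ring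
    _ ≤ ω * log (log u / ω) := by gcongr
    _ < 1 * √u := by rw [one_mul]; exact mul_log_log_div_lt_sqrt hu hω0 hω1

lemma log_lt_two_mul_log_one_div_of_mul_le {u κ ω : ℝ} (hu : 1 < u) (hκ : 0 < κ) (hω0 : 0 < ω)
    (hω1 : ω ≤ 1) (h : κ * u ≤ log (log u / ω)) : log u < 2 * log (1 / (κ * ω)) := by
  have hsqrt : √u < 1 / (κ * ω) := by
    rw [lt_div_iff₀ (mul_pos hκ hω0), mul_comm]
    exact mul_mul_sqrt_lt_one_of_mul_le hu hω0 hω1 h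
  have hlog := log_lt_log (sqrt_pos.2 (by linarith)) hsqrt
  rw [log_sqrt (by linarith)] at hlog
  linarith

lemma log_le_log_mul_two_mul_log_one_div_of_mul_le {u v c β ω : ℝ} (hu : 1 < u) (hv : exp 1 ≤ v)
    (hc : 0 < c) (hβ : exp 1 ≤ β) (hω0 : 0 < ω) (hω1 : ω ≤ 1) (hcω : c * ω ≤ exp (-1))
    (h : c * β / v * u ≤ log (log u / ω)) :
    log u ≤ log v * (2 * log (1 / (c * ω))) := by
  have hv0 : 0 < v := (exp_pos 1).trans_le hv
  have hβ0 : 0 < β := (exp_pos 1).trans_le hβ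
  have hlogv : 1 ≤ log v := (le_log_iff_exp_le hv0).2 hv
  have hlogβ : 1 ≤ log β := (le_log_iff_exp_le hβ0).2 hβ
  have hb : 1 ≤ log (1 / (c * ω)) := le_log_one_div (mul_pos hc hω0) hcω
  have hsplit : log (1 / (c * β / v * ω)) = log v + log (1 / (c * ω)) - log β := by
    rw [← log_mul (by positivity) (by positivity), ← log_div (by positivity) (by positivity)]
    congr 1
    field_simp
  calc log u ≤ 2 * log (1 / (c * β / v * ω)) :=
        (log_lt_two_mul_log_one_div_of_mul_le hu (by positivity) hω0 hω1 h).le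
    _ ≤ 2 * (log v + log (1 / (c * ω)) - 1) := by rw [hsplit]; gcongr
    _ ≤ log v * (2 * log (1 / (c * ω))) := by
        nlinarith [mul_nonneg (sub_nonneg.2 hlogv) (sub_nonneg.2 hb)]

lemma log_mul_div_log_mul_le {a x y : ℝ} (ha : 1 ≤ a) (hy : 1 < y) (hyx : y ≤ x) :
    log (a * x) / log (a * y) ≤ log x / log y := by
  have hloga : 0 ≤ log a := log_nonneg ha
  have hlogy : 0 < log y := log_pos hy
  have hlog : log y ≤ log x := log_le_log (by linarith) hyx
  rw [log_mul (by linarith) (by linarith), log_mul (by linarith) (by linarith),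
    div_le_div_iff₀ (by linarith) hlogy]
  nlinarith

lemma mul_div_le_log_div_log_of_mul_le {u v c ω δ : ℝ} (hu : 1 < u) (hv : exp 1 ≤ v) (hc : 0 < c)
    (hcω : c * ω ≤ exp (-1)) (hω : 0 < ω) (hωδ : ω ≤ δ) (hδ : δ ≤ exp (-exp 1))
    (h : c * log (log v / δ) / v * u ≤ log (log u / ω)) :
    c * u / v ≤ log (2 * log (1 / (c * ω)) / ω) / log (1 / δ) := by
  have hv0 : 0 < v := (exp_pos 1).trans_le hv
  have hδ0 : 0 < δ := hω.trans_le hωδ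
  have hδ1 : δ < 1 := hδ.trans_lt (exp_lt_one_iff.2 (neg_lt_zero.2 (exp_pos 1)))
  have hlogv : 1 ≤ log v := (le_log_iff_exp_le hv0).2 hv
  have hb : 1 ≤ log (1 / (c * ω)) := le_log_one_div (mul_pos hc hω) hcω
  have hβ : exp 1 ≤ log (log v / δ) :=
    (le_log_one_div hδ0 hδ).trans (log_le_log (by positivity) (by gcongr))
  have hβ0 : 0 < log (log v / δ) := (exp_pos 1).trans_le hβ
  have hlogu : log u ≤ log v * (2 * log (1 / (c * ω))) :=
    log_le_log_mul_two_mul_log_one_div_of_mul_le hu hv hc hβ hω (by linarith) hcω h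
  have hyx : 1 / δ ≤ 2 * log (1 / (c * ω)) / ω := by
    gcongr
    linarith
  calc c * u / v = c * log (log v / δ) / v * u / log (log v / δ) := by field_simp
    _ ≤ log (log v * (2 * log (1 / (c * ω))) / ω) / log (log v / δ) := by
        gcongr
        exact h.trans (log_le_log (div_pos (log_pos hu) hω) (by gcongr))
    _ = log (log v * (2 * log (1 / (c * ω)) / ω)) / log (log v * (1 / δ)) := by
        rw [mul_one_div, mul_div_assoc]
    _ ≤ log (2 * log (1 / (c * ω)) / ω) / log (1 / δ) :=
        log_mul_div_log_mul_le hlogv (one_lt_one_div hδ0 hδ1) hyx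

theorem stmt_2_general {t s k c ω δ : ℝ} (hk : 0 < k) (ht : 1 < k * t) (hs : exp 1 ≤ k * s)
    (hc : 0 < c) (hcω : c * ω ≤ exp (-1)) (hω : 0 < ω) (hωδ : ω ≤ δ) (hδ : δ ≤ exp (-exp 1))
    (h : 1 / t * log (log (k * t) / ω) ≥ c / s * log (log (k * s) / δ)) :
    t ≤ s / c * (log (2 * log (1 / (c * ω)) / ω) / log (1 / δ)) := by
  have ht0 : 0 < t := pos_of_mul_pos_right (by linarith) hk.le
  have hs0 : 0 < s := pos_of_mul_pos_right ((exp_pos 1).trans_le hs) hk.le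
  have h_scaled : c * log (log (k * s) / δ) / (k * s) * (k * t) ≤ log (log (k * t) / ω) :=
    calc c * log (log (k * s) / δ) / (k * s) * (k * t)
        = c / s * log (log (k * s) / δ) * t := by field_simp
      _ ≤ 1 / t * log (log (k * t) / ω) * t := by gcongr
      _ = log (log (k * t) / ω) := by field_simp
  calc t = s / c * (c * (k * t) / (k * s)) := by field_simp
    _ ≤ s / c * (log (2 * log (1 / (c * ω)) / ω) / log (1 / δ)) := by
        gcongr ?_ * ?_
        exact mul_div_le_log_div_log_of_mul_le ht hs hc hcω hω hωδ hδ h_scaled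

theorem stmt_2 (t s ε c ω δ : ℝ) (ht : 1 ≤ t) (hs : 3 ≤ s) (hε0 : 0 < ε) (hε1 : ε ≤ 1)
    (hc0 : 0 < c) (hc1 : c ≤ 1) (hω0 : 0 < ω) (hωδ : ω ≤ δ)
    (hδ : δ ≤ Real.exp (-Real.exp 1))
    (h : (1 / t) * Real.log (Real.log ((1 + ε) * t) / ω)
        ≥ (c / s) * Real.log (Real.log ((1 + ε) * s) / δ)) :
    t ≤ (s / c) * (Real.log (2 * Real.log (1 / (c * ω)) / ω) / Real.log (1 / δ)) := by
  have he : exp (-exp 1) ≤ exp (-1) := by simp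
  exact stmt_2_general (by linarith) (by nlinarith) (by nlinarith [exp_one_lt_three]) hc0
    (by nlinarith) hω0 hωδ hδ h
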